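/- Let ρ be an exchangeable probability measure on S^∞ with directing random measure p̃ and posterior distributions π(ξ^(n)). Assume that, for some p ≥ 1, p̂_n ∈ [S]_p for all n and p̃ ∈ [S]_p with ρ-probability 1. Let {b_n} be an increasing, diverging sequence of positive numbers such that, with ρ-probability 1, the law p̃ satisfies both E_{p̃^∞}[ ( sup_{n≥1} b_n d^{(p)}(p̃, p̂_n) )^p ] ≤ C_p(p̃) and p̃^∞( limsup_{n→∞} b_n d^{(p)}(p̃, p̂_n) ≤ Y_p(p̃) ) = 1, where C_p(p̃) and Y_p(p̃) are real random variables with ρ[C_p(p̃)] < +∞. Then ρ( limsup_{n→∞} b_n · d^{(p)}_{[[S]_p]}( π(ξ^(n)), δ_{p̂_n} ) ≤ Y_p(p̃) ) = 1. -/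

import Mathlib

open MeasureTheory ProbabilityTheory
open scoped ENNReal

noncomputable section

/-- The `p`-Wasserstein-type distance associated with a cost function `c`. -/
noncomputable def wassW {X : Type*} [MeasurableSpace X] (c : X → X → ℝ) (p : ℝ)
    (μ ν : Measure X) : ℝ :=
  sInf {r : ℝ | ∃ γ : Measure (X × X), γ.map Prod.fst = μ ∧ γ.map Prod.snd = ν ∧
    r = (∫ z, c z.1 z.2 ^ p ∂γ) ^ (1 / p)}

/-- Membership in `[S]_p`: a Borel probability measure with finite `p`-th moment. -/
def MemWp {S : Type*} [MeasurableSpace S] [MetricSpace S] (p : ℝ) (𝔭 : Measure S) : Prop :=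
  IsProbabilityMeasure 𝔭 ∧ ∃ x₀ : S, Integrable (fun x => dist x x₀ ^ p) 𝔭

/-!
The only coupling of the posterior with `δ_{p̂_n}` is the product, so the `p`-th
power of `b_n d^{(p)}(π(ξ^(n)), δ_{p̂_n})` is at most the posterior mean of
`X_n := (b_n d^{(p)}(p̃, p̂_n))^p`, that is `E[X_n | ξ_1, …, ξ_n]`. By de Finetti the two
hypotheses on `p̃^∞` say that `sup_n X_n` is `ρ`-integrable and that
`limsup_n X_n ≤ Y_p(p̃)^p` almost surely. Hunt's lemma then bounds `limsup_n E[X_n | ξ_1, …, ξ_n]`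
by `limsup_n X_n`: for `n ≥ m` it is dominated by the martingale closed by
`sup_{k ≥ m} X_k`.

This needs `d^{(p)}` to be measurable for the `σ`-algebra generated by the evaluations
`μ ↦ μ(A)`. Pushing the measures forward along maps onto finite sets close to the identity reduces
this to a finite space. There the pairs of marginals that admit a transport plan of cost at most `r`
form a closed set, being a continuous image of a compact one, so that the sublevel sets of `d^{(p)}`
are measurable.
-/

open Filter Topology

section Couplings

variable {X Y ι κ : Type*} [MeasurableSpace X] [MeasurableSpace Y]
  [MeasurableSpace ι] [MeasurableSpace κ]

/-- The couplings (transport plans) of `μ` and `ν`. -/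
def couplings (μ : Measure X) (ν : Measure Y) : Set (Measure (X × Y)) :=
  {γ | γ.map Prod.fst = μ ∧ γ.map Prod.snd = ν}

lemma prod_mem_couplings (μ : Measure X) (ν : Measure Y) [IsProbabilityMeasure μ]
    [IsProbabilityMeasure ν] : μ.prod ν ∈ couplings μ ν :=
  ⟨Measure.fst_prod, Measure.snd_prod⟩

lemma map_prodMap_mem_couplings {μ : Measure X} {ν : Measure Y} {γ : Measure (X × Y)}
    (hγ : γ ∈ couplings μ ν) {f : X → ι} {g : Y → κ} (hf : Measurable f) (hg : Measurable g) :
    γ.map (Prod.map f g) ∈ couplings (μ.map f) (ν.map g) := by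
  obtain ⟨rfl, rfl⟩ := hγ
  constructor
  · rw [Measure.map_map measurable_fst (hf.prodMap hg), Measure.map_map hf measurable_fst]; rfl
  · rw [Measure.map_map measurable_snd (hf.prodMap hg), Measure.map_map hg measurable_snd]; rfl

lemma absolutelyContinuous_prod_of_mem_couplings [Countable ι] [Countable κ]
    {μ : Measure ι} {ν : Measure κ} [SFinite ν] {γ : Measure (ι × κ)} (hγ : γ ∈ couplings μ ν) :
    γ ≪ μ.prod ν := by
  obtain ⟨rfl, rfl⟩ := hγ
  intro N hN
  rw [← Set.biUnion_of_singleton N, measure_biUnion_null_iff N.to_countable]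
  rintro ⟨i, j⟩ hij
  have hprod : (γ.map Prod.fst) {i} * (γ.map Prod.snd) {j} = 0 := by
    rw [← Measure.prod_prod, Set.singleton_prod_singleton]
    exact measure_mono_null (Set.singleton_subset_iff.2 hij) hN
  rcases mul_eq_zero.1 hprod with h | h
  · exact measure_mono_null (t := Prod.fst ⁻¹' {i}) (by simp)
      (Measure.preimage_null_of_map_null measurable_fst.aemeasurable h)
  · exact measure_mono_null (t := Prod.snd ⁻¹' {j}) (by simp)
      (Measure.preimage_null_of_map_null measurable_snd.aemeasurable h)

lemma map_withDensity_comp (μ : Measure X) {f : X → ι} (hf : Measurable f) {w : ι → ℝ≥0∞}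
    (hw : Measurable w) : (μ.withDensity (w ∘ f)).map f = (μ.map f).withDensity w := by
  ext A hA
  rw [Measure.map_apply hf hA, withDensity_apply _ (hf hA), withDensity_apply _ hA,
    setLIntegral_map hA hw hf]
  rfl

lemma map_fst_withDensity_prod_apply (μ : Measure X) (ν : Measure Y) [SFinite μ] [SFinite ν]
    {w : X × Y → ℝ≥0∞} (hw : Measurable w) {A : Set X} (hA : MeasurableSet A) :
    ((μ.prod ν).withDensity w).map Prod.fst A = ∫⁻ x in A, ∫⁻ y, w (x, y) ∂ν ∂μ := by
  rw [Measure.map_apply measurable_fst hA, withDensity_apply _ (measurable_fst hA),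
    ← Set.prod_univ, ← Measure.prod_restrict, Measure.restrict_univ,
    lintegral_prod _ hw.aemeasurable]

lemma map_fst_withDensity_prod_comp {μ : Measure X} {ν : Measure Y} [IsFiniteMeasure μ]
    [IsFiniteMeasure ν] {f : X → ι} {g : Y → κ} (hf : Measurable f) (hg : Measurable g)
    {w : ι × κ → ℝ≥0∞} (hw : Measurable w)
    (h : (((μ.map f).prod (ν.map g)).withDensity w).map Prod.fst = μ.map f) :
    ((μ.prod ν).withDensity (w ∘ Prod.map f g)).map Prod.fst = μ := by
  have hdens : ∀ᵐ i ∂(μ.map f), ∫⁻ j, w (i, j) ∂(ν.map g) = 1 :=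
    ae_eq_of_forall_setLIntegral_eq_of_sigmaFinite hw.lintegral_prod_right' measurable_const
      fun B hB _ => by rw [← map_fst_withDensity_prod_apply _ _ hw hB, h, setLIntegral_one]
  ext A hA
  rw [map_fst_withDensity_prod_apply _ _ (hw.comp (hf.prodMap hg)) hA, ← setLIntegral_one]
  refine lintegral_congr_ae (ae_restrict_of_ae ?_)
  filter_upwards [ae_of_ae_map hf.aemeasurable hdens] with x hx
  rw [← hx, lintegral_map (by fun_prop) hg]
  rfl

lemma map_snd_withDensity_prod (μ : Measure X) (ν : Measure Y) [SFinite μ] [SFinite ν]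
    {w : X × Y → ℝ≥0∞} (hw : Measurable w) :
    ((μ.prod ν).withDensity w).map Prod.snd =
      ((ν.prod μ).withDensity (w ∘ Prod.swap)).map Prod.fst := by
  rw [← Measure.prod_swap, ← map_withDensity_comp _ measurable_swap hw,
    Measure.map_map measurable_snd measurable_swap]
  rfl

/-- On atoms the lift is the explicit `∑ i j, γ {(i, j)} / (μ Eᵢ * ν Fⱼ) • (μ|Eᵢ).prod (ν|Fⱼ)`,
where `Eᵢ` and `Fⱼ` are the fibres of `f` and `g`. -/
theorem exists_mem_couplings_map_prodMap_eq [Countable ι] [Countable κ] {μ : Measure X}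
    {ν : Measure Y} [IsFiniteMeasure μ] [IsFiniteMeasure ν] {f : X → ι} {g : Y → κ}
    (hf : Measurable f) (hg : Measurable g) {γ : Measure (ι × κ)}
    (hγ : γ ∈ couplings (μ.map f) (ν.map g)) :
    ∃ γ' ∈ couplings μ ν, γ'.map (Prod.map f g) = γ := by
  have : IsFiniteMeasure (γ.map Prod.fst) := by rw [hγ.1]; infer_instance
  have : IsFiniteMeasure γ := Measure.isFiniteMeasure_of_map measurable_fst.aemeasurable
  obtain ⟨w, hw, hwγ⟩ :
      ∃ w, Measurable w ∧ ((μ.map f).prod (ν.map g)).withDensity w = γ :=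
    ⟨_, Measure.measurable_rnDeriv _ _,
      Measure.withDensity_rnDeriv_eq _ _ (absolutelyContinuous_prod_of_mem_couplings hγ)⟩
  refine ⟨(μ.prod ν).withDensity (w ∘ Prod.map f g), ⟨?_, ?_⟩, ?_⟩
  · exact map_fst_withDensity_prod_comp hf hg hw (by rw [hwγ, hγ.1])
  · have hswap : (((ν.map g).prod (μ.map f)).withDensity (w ∘ Prod.swap)).map Prod.fst =
        ν.map g := by rw [← map_snd_withDensity_prod _ _ hw, hwγ, hγ.2]
    rw [map_snd_withDensity_prod _ _ (hw.comp (hf.prodMap hg)),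
      Function.comp_assoc, Prod.map_comp_swap, ← Function.comp_assoc]
    exact map_fst_withDensity_prod_comp hg hf (hw.comp measurable_swap) hswap
  · rw [map_withDensity_comp _ (hf.prodMap hg) hw, ← Measure.map_prod_map _ _ hf hg, hwγ]

end Couplings

section WassersteinEDist

variable {X Y E : Type*} [MeasurableSpace X] [MeasurableSpace Y] [PseudoEMetricSpace E]

/-- The `L^p` distance `(∫ d(f, g)^p dμ)^(1/p)` between two maps into an extended metric space. -/
def lpEDist (p : ℝ) (μ : Measure X) (f g : X → E) : ℝ≥0∞ :=
  (∫⁻ x, edist (f x) (g x) ^ p ∂μ) ^ (1 / p)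

lemma lpEDist_comm (p : ℝ) (μ : Measure X) (f g : X → E) : lpEDist p μ f g = lpEDist p μ g f := by
  simp_rw [lpEDist, edist_comm]

lemma lpEDist_triangle [MeasurableSpace E] [OpensMeasurableSpace E] [SecondCountableTopology E]
    {p : ℝ} (hp : 1 ≤ p) (μ : Measure X) {f g h : X → E} (hf : Measurable f) (hg : Measurable g)
    (hh : Measurable h) : lpEDist p μ f h ≤ lpEDist p μ f g + lpEDist p μ g h := by
  refine le_trans ?_ (ENNReal.lintegral_Lp_add_le (hf.edist hg).aemeasurable
    (hg.edist hh).aemeasurable hp)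
  unfold lpEDist
  gcongr
  exact edist_triangle _ _ _

lemma lpEDist_triangle4 [MeasurableSpace E] [OpensMeasurableSpace E] [SecondCountableTopology E]
    {p : ℝ} (hp : 1 ≤ p) (μ : Measure X) {f g h k : X → E} (hf : Measurable f)
    (hg : Measurable g) (hh : Measurable h) (hk : Measurable k) :
    lpEDist p μ f k ≤ lpEDist p μ f g + lpEDist p μ g h + lpEDist p μ h k :=
  (lpEDist_triangle hp μ hf hh hk).trans (by gcongr; exact lpEDist_triangle hp μ hf hg hh)

lemma lpEDist_map (p : ℝ) (μ : Measure X) {φ : X → Y} (hφ : Measurable φ) {f g : Y → E}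
    (hfg : Measurable fun y => edist (f y) (g y)) :
    lpEDist p (μ.map φ) f g = lpEDist p μ (f ∘ φ) (g ∘ φ) := by
  rw [lpEDist, lintegral_map (hfg.pow_const p) hφ]
  rfl

lemma measurable_lpEDist [MeasurableSpace E] [OpensMeasurableSpace E] [SecondCountableTopology E]
    (p : ℝ) {f g : X → E} (hf : Measurable f) (hg : Measurable g) :
    Measurable fun μ : Measure X => lpEDist p μ f g :=
  (Measure.measurable_lintegral ((hf.edist hg).pow_const p)).pow_const _

/-- The `p`-Wasserstein distance with values in `[0, ∞]`; unlike `wassW` it takes the value `∞`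
where the transport cost is infinite or there is no coupling. -/
def wassersteinEDist [MeasurableSpace E] (p : ℝ) (μ ν : Measure E) : ℝ≥0∞ :=
  ⨅ γ : couplings μ ν, lpEDist p (γ : Measure (E × E)) Prod.fst Prod.snd

lemma wassersteinEDist_le [MeasurableSpace E] (p : ℝ) {μ ν : Measure E} {γ : Measure (E × E)}
    (hγ : γ ∈ couplings μ ν) : wassersteinEDist p μ ν ≤ lpEDist p γ Prod.fst Prod.snd :=
  iInf_le (fun γ : couplings μ ν => lpEDist p (γ : Measure (E × E)) Prod.fst Prod.snd) ⟨γ, hγ⟩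

lemma wassersteinEDist_lt_iff_exists_rat [MeasurableSpace E] {p : ℝ} {μ ν : Measure E}
    {r : ℝ≥0∞} : wassersteinEDist p μ ν < r ↔ ∃ q : ℚ, ENNReal.ofReal q < r ∧
      ∃ γ ∈ couplings μ ν, lpEDist p γ Prod.fst Prod.snd ≤ ENNReal.ofReal q := by
  constructor
  · intro h
    obtain ⟨⟨γ, hγ⟩, hγr⟩ := iInf_lt_iff.1 h
    obtain ⟨q, -, hγq, hqr⟩ := ENNReal.lt_iff_exists_rat_btwn.1 hγr
    exact ⟨q, hqr, γ, hγ, hγq.le⟩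
  · rintro ⟨q, hqr, γ, hγ, hγq⟩
    exact ((wassersteinEDist_le p hγ).trans hγq).trans_lt hqr

end WassersteinEDist

section Finite

variable {ι κ : Type*} [Fintype ι] [Fintype κ]

/-- The pair of marginals of a matrix of weights on a product of two finite types. -/
def marginalWeights (w : ι × κ → ℝ≥0∞) : (ι → ℝ≥0∞) × (κ → ℝ≥0∞) :=
  (fun i => ∑ j, w (i, j), fun j => ∑ i, w (i, j))

lemma continuous_marginalWeights :
    Continuous (marginalWeights : (ι × κ → ℝ≥0∞) → (ι → ℝ≥0∞) × (κ → ℝ≥0∞)) := by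
  unfold marginalWeights
  fun_prop

lemma isClosed_marginalWeights_image_cost_le (c : ι × κ → ℝ≥0∞) (hc : ∀ z, c z ≠ ⊤) (r : ℝ≥0∞) :
    IsClosed (marginalWeights '' {w | ∑ z, c z * w z ≤ r}) := by
  have hcost : Continuous fun w : ι × κ → ℝ≥0∞ => ∑ z, c z * w z :=
    continuous_finsetSum _ fun z _ =>
      (ENNReal.continuous_const_mul (hc z)).comp (continuous_apply z)
  exact ((isClosed_le hcost continuous_const).isCompact.image continuous_marginalWeights).isClosed

variable [MeasurableSpace ι] [MeasurableSingletonClass ι]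
  [MeasurableSpace κ] [MeasurableSingletonClass κ]

lemma mem_couplings_iff_marginalWeights {μ : Measure ι} {ν : Measure κ} {γ : Measure (ι × κ)} :
    γ ∈ couplings μ ν ↔
      marginalWeights (fun z => γ {z}) = (fun i => μ {i}, fun j => ν {j}) := by
  have hfst (i : ι) : γ.map Prod.fst {i} = ∑ j, γ {(i, j)} := by
    rw [Measure.map_apply measurable_fst (measurableSet_singleton i),
      measure_preimage_fst_singleton_eq_sum]
  have hsnd (j : κ) : γ.map Prod.snd {j} = ∑ i, γ {(i, j)} := by
    rw [Measure.map_apply measurable_snd (measurableSet_singleton j),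
      measure_preimage_snd_singleton_eq_sum]
  simp only [couplings, Set.mem_ofPred_eq, Measure.ext_iff_singleton, hfst, hsnd,
    marginalWeights, Prod.mk.injEq, funext_iff]

lemma exists_mem_couplings_lpEDist_le_iff [PseudoEMetricSpace ι] {p : ℝ} (hp : 0 < p)
    {μ ν : Measure ι} {q : ℝ≥0∞} :
    (∃ γ ∈ couplings μ ν, lpEDist p γ Prod.fst Prod.snd ≤ q) ↔
      (fun i => μ {i}, fun i => ν {i}) ∈
        marginalWeights '' {w | ∑ z : ι × ι, edist z.1 z.2 ^ p * w z ≤ q ^ p} := by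
  have hcost (γ : Measure (ι × ι)) :
      lpEDist p γ Prod.fst Prod.snd ≤ q ↔ ∑ z, edist z.1 z.2 ^ p * γ {z} ≤ q ^ p := by
    rw [lpEDist, lintegral_fintype, one_div, ENNReal.rpow_inv_le_iff hp]
  simp only [hcost, mem_couplings_iff_marginalWeights]
  constructor
  · rintro ⟨γ, hγ, hγq⟩
    exact ⟨_, hγq, hγ⟩
  · rintro ⟨w, hwq, hw⟩
    obtain ⟨γ, rfl⟩ : ∃ γ : Measure (ι × ι), w = fun z => γ {z} :=
      ⟨Measure.sum fun z => w z • Measure.dirac z,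
        by simp only [Measure.sum_smul_dirac_singleton]⟩
    exact ⟨γ, hw, hwq⟩

end Finite

theorem measurable_wassersteinEDist_of_finite {ι : Type*} [Finite ι] [PseudoMetricSpace ι]
    [MeasurableSpace ι] [MeasurableSingletonClass ι] {p : ℝ} (hp : 0 < p) :
    Measurable fun z : Measure ι × Measure ι => wassersteinEDist p z.1 z.2 := by
  have : Fintype ι := Fintype.ofFinite ι
  let atoms (z : Measure ι × Measure ι) : (ι → ℝ≥0∞) × (ι → ℝ≥0∞) :=
    (fun i => z.1 {i}, fun i => z.2 {i})
  have hatoms : Measurable atoms := by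
    refine .prodMk (measurable_pi_lambda _ fun i => ?_) (measurable_pi_lambda _ fun i => ?_)
    · exact (Measure.measurable_coe (measurableSet_singleton i)).comp measurable_fst
    · exact (Measure.measurable_coe (measurableSet_singleton i)).comp measurable_snd
  refine measurable_of_Iio fun r => ?_
  have hsublevel : (fun z : Measure ι × Measure ι => wassersteinEDist p z.1 z.2) ⁻¹' Set.Iio r =
      ⋃ (q : ℚ) (_ : ENNReal.ofReal q < r), atoms ⁻¹' (marginalWeights ''
        {w | ∑ z : ι × ι, edist z.1 z.2 ^ p * w z ≤ ENNReal.ofReal q ^ p}) := by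
    ext z
    simp only [Set.mem_preimage, Set.mem_Iio, wassersteinEDist_lt_iff_exists_rat,
      exists_mem_couplings_lpEDist_le_iff hp, Set.mem_iUnion, exists_prop, atoms]
  rw [hsublevel]
  exact .iUnion fun q => .iUnion fun _ => hatoms (isClosed_marginalWeights_image_cost_le _
    (fun z => ENNReal.rpow_ne_top_of_nonneg hp.le (edist_ne_top z.1 z.2)) _).measurableSet

lemma edist_rpow_eq_enorm {E : Type*} [PseudoMetricSpace E] {p : ℝ} (hp : 0 ≤ p) (x y : E) :
    edist x y ^ p = ‖dist x y ^ p‖ₑ := by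
  rw [Real.enorm_of_nonneg (by positivity), edist_dist,
    ENNReal.ofReal_rpow_of_nonneg dist_nonneg hp]

lemma lpEDist_ne_top_iff {X E : Type*} [MeasurableSpace X] [PseudoEMetricSpace E] {p : ℝ}
    (hp : 0 < p) {μ : Measure X} {f g : X → E} :
    lpEDist p μ f g ≠ ⊤ ↔ ∫⁻ x, edist (f x) (g x) ^ p ∂μ ≠ ⊤ := by
  rw [lpEDist, Ne, ENNReal.rpow_eq_top_iff_of_pos (by positivity)]

section Moments

variable {S : Type*} [MetricSpace S] [SecondCountableTopology S] [MeasurableSpace S]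
  [BorelSpace S] {p : ℝ} {μ ν : Measure S}

lemma integrable_dist_rpow_iff (hp : 0 ≤ p) (x₀ : S) :
    Integrable (fun x => dist x x₀ ^ p) μ ↔ ∫⁻ x, edist x x₀ ^ p ∂μ < ⊤ := by
  have hmeas : AEStronglyMeasurable (fun x => dist x x₀ ^ p) μ :=
    ((measurable_id.dist measurable_const).pow_const p).aestronglyMeasurable
  simp only [edist_rpow_eq_enorm hp, ← hasFiniteIntegral_iff_enorm, Integrable, hmeas, true_and]

lemma MemWp.lintegral_edist_rpow_ne_top (hp : 1 ≤ p) (hμ : MemWp p μ) (x : S) :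
    ∫⁻ y, edist y x ^ p ∂μ ≠ ⊤ := by
  have hp0 : 0 < p := one_pos.trans_le hp
  obtain ⟨hprob, x₀, hx₀⟩ := hμ
  rw [integrable_dist_rpow_iff hp0.le] at hx₀
  refine (lpEDist_ne_top_iff (f := id) (g := fun _ => x) hp0).1 ?_
  refine ne_top_of_le_ne_top (ENNReal.add_ne_top.2 ⟨?_, ?_⟩)
    (lpEDist_triangle hp μ measurable_id (measurable_const (a := x₀)) measurable_const)
  · exact (lpEDist_ne_top_iff hp0).2 hx₀.ne
  · rw [lpEDist_ne_top_iff hp0, lintegral_const, measure_univ, mul_one]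
    exact ENNReal.rpow_ne_top_of_nonneg hp0.le (edist_ne_top _ _)

lemma measurableSet_memWp (hp : 1 ≤ p) : MeasurableSet {μ : Measure S | MemWp p μ} := by
  rcases isEmpty_or_nonempty S with hS | ⟨⟨x⟩⟩
  · simp [MemWp]
  have hiff : {μ : Measure S | MemWp p μ} =
      {μ | μ Set.univ = 1} ∩ {μ | ∫⁻ y, edist y x ^ p ∂μ < ⊤} := by
    ext μ
    refine ⟨fun h => ⟨h.1.measure_univ, (h.lintegral_edist_rpow_ne_top hp x).lt_top⟩,
      fun h => ⟨⟨h.1⟩, x, (integrable_dist_rpow_iff (zero_le_one.trans hp) x).2 h.2⟩⟩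
  rw [hiff]
  exact (measurableSet_eq_fun (Measure.measurable_coe .univ) measurable_const).inter
    (measurableSet_lt (Measure.measurable_lintegral
      ((measurable_id.edist measurable_const).pow_const p)) measurable_const)

lemma lpEDist_ne_top_of_mem_couplings (hp : 1 ≤ p) (hμ : MemWp p μ) (hν : MemWp p ν)
    {γ : Measure (S × S)} (hγ : γ ∈ couplings μ ν) : lpEDist p γ Prod.fst Prod.snd ≠ ⊤ := by
  have hp0 : 0 < p := one_pos.trans_le hp
  obtain ⟨x, -⟩ := hμ.2
  have hconst {φ : S × S → S} (hφ : Measurable φ) (h : MemWp p (γ.map φ)) :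
      lpEDist p γ φ (fun _ => x) ≠ ⊤ := by
    have hx := (lpEDist_ne_top_iff (f := id) (g := fun _ => x) hp0).2
      (h.lintegral_edist_rpow_ne_top hp x)
    rwa [lpEDist_map p γ hφ (measurable_id.edist measurable_const)] at hx
  refine ne_top_of_le_ne_top (ENNReal.add_ne_top.2 ⟨?_, ?_⟩)
    (lpEDist_triangle hp γ measurable_fst (measurable_const (a := x)) measurable_snd)
  · exact hconst measurable_fst (by rwa [hγ.1])
  · rw [lpEDist_comm]
    exact hconst measurable_snd (by rwa [hγ.2])

end Moments

section Discretization

variable {S : Type*} [MetricSpace S] [SecondCountableTopology S] [MeasurableSpace S]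
  [BorelSpace S] {p : ℝ}

lemma lpEDist_fst_comp_fst {μ ν : Measure S} {γ : Measure (S × S)} (hγ : γ ∈ couplings μ ν)
    {τ : S → S} (hτ : Measurable τ) :
    lpEDist p γ Prod.fst (τ ∘ Prod.fst) = lpEDist p μ id τ := by
  rw [← hγ.1, lpEDist_map p γ measurable_fst (measurable_id.edist hτ)]
  rfl

lemma lpEDist_snd_comp_snd {μ ν : Measure S} {γ : Measure (S × S)} (hγ : γ ∈ couplings μ ν)
    {τ : S → S} (hτ : Measurable τ) :
    lpEDist p γ Prod.snd (τ ∘ Prod.snd) = lpEDist p ν id τ := by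
  rw [← hγ.2, lpEDist_map p γ measurable_snd (measurable_id.edist hτ)]
  rfl

lemma lpEDist_fst_snd_le_of_mem_couplings (hp : 1 ≤ p) {μ ν : Measure S} {γ : Measure (S × S)}
    (hγ : γ ∈ couplings μ ν) {τ : S → S} (hτ : Measurable τ) :
    lpEDist p γ Prod.fst Prod.snd ≤ lpEDist p μ id τ +
      lpEDist p γ (τ ∘ Prod.fst) (τ ∘ Prod.snd) + lpEDist p ν id τ := by
  rw [← lpEDist_fst_comp_fst hγ hτ, ← lpEDist_snd_comp_snd hγ hτ,
    lpEDist_comm p γ Prod.snd (τ ∘ Prod.snd)]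
  exact lpEDist_triangle4 hp γ measurable_fst (hτ.comp measurable_fst)
    (hτ.comp measurable_snd) measurable_snd

lemma lpEDist_comp_fst_comp_snd_le_of_mem_couplings (hp : 1 ≤ p) {μ ν : Measure S}
    {γ : Measure (S × S)} (hγ : γ ∈ couplings μ ν) {τ : S → S} (hτ : Measurable τ) :
    lpEDist p γ (τ ∘ Prod.fst) (τ ∘ Prod.snd) ≤
      lpEDist p μ id τ + lpEDist p γ Prod.fst Prod.snd + lpEDist p ν id τ := by
  rw [← lpEDist_fst_comp_fst hγ hτ, ← lpEDist_snd_comp_snd hγ hτ,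
    lpEDist_comm p γ Prod.fst (τ ∘ Prod.fst)]
  exact lpEDist_triangle4 hp γ (hτ.comp measurable_fst) measurable_fst measurable_snd
    (hτ.comp measurable_snd)

/-- The Wasserstein distance between the images of `μ` and `ν` under a simple function `τ`, as
measures on the finite metric space `Set.range τ`. -/
def discretizedWassersteinEDist (p : ℝ) (τ : SimpleFunc S S) (μ ν : Measure S) : ℝ≥0∞ :=
  wassersteinEDist p (μ.map (Set.rangeFactorization τ)) (ν.map (Set.rangeFactorization τ))

lemma measurable_discretizedWassersteinEDist (hp : 0 < p) (τ : SimpleFunc S S) :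
    Measurable fun z : Measure S × Measure S => discretizedWassersteinEDist p τ z.1 z.2 := by
  have : Finite (Set.range τ) := τ.finite_range
  have hτ := Measure.measurable_map (Set.rangeFactorization τ) τ.measurable.subtype_mk
  exact (measurable_wassersteinEDist_of_finite hp).comp
    ((hτ.comp measurable_fst).prodMk (hτ.comp measurable_snd))

lemma lpEDist_map_rangeFactorization (τ : SimpleFunc S S) (γ : Measure (S × S)) :
    lpEDist p (γ.map (Prod.map (Set.rangeFactorization τ) (Set.rangeFactorization τ)))
      Prod.fst Prod.snd = lpEDist p γ (τ ∘ Prod.fst) (τ ∘ Prod.snd) := by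
  have hτ : Measurable (Set.rangeFactorization τ) := τ.measurable.subtype_mk
  rw [lpEDist_map p γ (hτ.prodMap hτ) (measurable_fst.edist measurable_snd)]
  rfl

lemma discretizedWassersteinEDist_le (hp : 1 ≤ p) (τ : SimpleFunc S S) (μ ν : Measure S) :
    discretizedWassersteinEDist p τ μ ν ≤
      lpEDist p μ id τ + wassersteinEDist p μ ν + lpEDist p ν id τ := by
  have hτ : Measurable (Set.rangeFactorization τ) := τ.measurable.subtype_mk
  simp only [wassersteinEDist, ENNReal.add_iInf, ENNReal.iInf_add]
  refine le_iInf fun ⟨γ, hγ⟩ => ?_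
  calc discretizedWassersteinEDist p τ μ ν
      ≤ lpEDist p γ (τ ∘ Prod.fst) (τ ∘ Prod.snd) := by
        rw [← lpEDist_map_rangeFactorization]
        exact wassersteinEDist_le p (map_prodMap_mem_couplings hγ hτ hτ)
    _ ≤ lpEDist p μ id τ + lpEDist p γ Prod.fst Prod.snd + lpEDist p ν id τ :=
        lpEDist_comp_fst_comp_snd_le_of_mem_couplings hp hγ τ.measurable

lemma wassersteinEDist_le_discretized (hp : 1 ≤ p) (τ : SimpleFunc S S) (μ ν : Measure S)
    [IsFiniteMeasure μ] [IsFiniteMeasure ν] :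
    wassersteinEDist p μ ν ≤
      lpEDist p μ id τ + discretizedWassersteinEDist p τ μ ν + lpEDist p ν id τ := by
  have : Finite (Set.range τ) := τ.finite_range
  have hτ : Measurable (Set.rangeFactorization τ) := τ.measurable.subtype_mk
  simp only [discretizedWassersteinEDist, wassersteinEDist, ENNReal.add_iInf, ENNReal.iInf_add]
  refine le_iInf fun ⟨γ, hγ⟩ => ?_
  obtain ⟨γ', hγ', rfl⟩ := exists_mem_couplings_map_prodMap_eq hτ hτ hγ
  rw [lpEDist_map_rangeFactorization]
  exact (wassersteinEDist_le p hγ').trans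
    (lpEDist_fst_snd_le_of_mem_couplings hp hγ' τ.measurable)

lemma tendsto_lpEDist_nearestPt (hp : 0 < p) {e : ℕ → S} (he : DenseRange e) {μ : Measure S}
    (hμ : ∫⁻ x, edist x (e 0) ^ p ∂μ ≠ ⊤) :
    Tendsto (fun N => lpEDist p μ id (SimpleFunc.nearestPt e N)) atTop (𝓝 0) := by
  have hlim : Tendsto (fun N => ∫⁻ x, edist x (SimpleFunc.nearestPt e N x) ^ p ∂μ) atTop
      (𝓝 (∫⁻ _, 0 ∂μ)) := by
    refine tendsto_lintegral_of_dominated_convergence (fun x => edist x (e 0) ^ p)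
      (fun N => (measurable_id.edist (SimpleFunc.nearestPt e N).measurable).pow_const p)
      (fun N => .of_forall fun x => ?_) hμ (.of_forall fun x => ?_)
    · simp only [edist_comm x]
      gcongr
      exact SimpleFunc.edist_nearestPt_le e x (Nat.zero_le N)
    · have hx := (tendsto_const_nhds (x := x)).edist (SimpleFunc.tendsto_nearestPt (he x))
      simpa [ENNReal.zero_rpow_of_pos hp] using hx.ennrpow_const p
  simpa [lpEDist, ENNReal.zero_rpow_of_pos (inv_pos.2 hp)] using hlim.ennrpow_const (1 / p)

theorem exists_measurable_eq_wassersteinEDist [Nonempty S] (hp : 1 ≤ p) :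
    ∃ V : Measure S × Measure S → ℝ≥0∞, Measurable V ∧
      ∀ μ ν, MemWp p μ → MemWp p ν → V (μ, ν) = wassersteinEDist p μ ν := by
  have hp0 : 0 < p := one_pos.trans_le hp
  let e := TopologicalSpace.denseSeq S
  have he : DenseRange e := TopologicalSpace.denseRange_denseSeq S
  let τ := SimpleFunc.nearestPt e
  let r (N : ℕ) (μ : Measure S) : ℝ≥0∞ := lpEDist p μ id (τ N)
  have hr (N : ℕ) : Measurable (r N) := measurable_lpEDist p measurable_id (τ N).measurable
  refine ⟨fun z => ⨅ N, (r N z.1 + discretizedWassersteinEDist p (τ N) z.1 z.2 + r N z.2),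
    .iInf fun N => (((hr N).comp measurable_fst).add
      (measurable_discretizedWassersteinEDist hp0 (τ N))).add ((hr N).comp measurable_snd),
    fun μ ν hμ hν => ?_⟩
  have := hμ.1
  have := hν.1
  refine le_antisymm ?_ (le_iInf fun N => wassersteinEDist_le_discretized hp (τ N) μ ν)
  have hrμ : Tendsto (r · μ) atTop (𝓝 0) :=
    tendsto_lpEDist_nearestPt hp0 he (hμ.lintegral_edist_rpow_ne_top hp (e 0))
  have hrν : Tendsto (r · ν) atTop (𝓝 0) :=
    tendsto_lpEDist_nearestPt hp0 he (hν.lintegral_edist_rpow_ne_top hp (e 0))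
  have hlim : Tendsto (fun N => r N μ + (r N μ + wassersteinEDist p μ ν + r N ν) + r N ν) atTop
      (𝓝 (wassersteinEDist p μ ν)) := by
    simpa using (hrμ.add ((hrμ.add_const (wassersteinEDist p μ ν)).add hrν)).add hrν
  refine ge_of_tendsto' hlim fun N => (iInf_le _ N).trans ?_
  gcongr
  exact discretizedWassersteinEDist_le hp (τ N) μ ν

end Discretization

section WassW

lemma wassW_nonneg {X : Type*} [MeasurableSpace X] {c : X → X → ℝ} (hc : ∀ x y, 0 ≤ c x y)
    (p : ℝ) (μ ν : Measure X) : 0 ≤ wassW c p μ ν := by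
  refine Real.sInf_nonneg ?_
  rintro _ ⟨γ, -, -, rfl⟩
  exact Real.rpow_nonneg (integral_nonneg fun z => Real.rpow_nonneg (hc _ _) _) _

lemma ofReal_wassW_le {X : Type*} [MeasurableSpace X] {c : X → X → ℝ} (hc : ∀ x y, 0 ≤ c x y)
    {p : ℝ} (hp : 0 ≤ p) {μ ν : Measure X} {γ : Measure (X × X)} (hγ : γ ∈ couplings μ ν) :
    ENNReal.ofReal (wassW c p μ ν) ≤ (∫⁻ z, ENNReal.ofReal (c z.1 z.2 ^ p) ∂γ) ^ (1 / p) := by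
  have hint : 0 ≤ ∫ z, c z.1 z.2 ^ p ∂γ := integral_nonneg fun z => Real.rpow_nonneg (hc _ _) _
  have hle : wassW c p μ ν ≤ (∫ z, c z.1 z.2 ^ p ∂γ) ^ (1 / p) := by
    refine csInf_le ⟨0, ?_⟩ ⟨γ, hγ.1, hγ.2, rfl⟩
    rintro _ ⟨γ', -, -, rfl⟩
    exact Real.rpow_nonneg (integral_nonneg fun z => Real.rpow_nonneg (hc _ _) _) _
  refine (ENNReal.ofReal_le_ofReal hle).trans ?_
  rw [← ENNReal.ofReal_rpow_of_nonneg hint (by positivity), ← Real.enorm_of_nonneg hint]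
  gcongr
  refine (enorm_integral_le_lintegral_enorm _).trans_eq ?_
  simp_rw [Real.enorm_of_nonneg (Real.rpow_nonneg (hc _ _) _)]

lemma ofReal_wassW_dirac_le {X : Type*} [MeasurableSpace X] {c : X → X → ℝ}
    (hc : ∀ x y, 0 ≤ c x y) {p : ℝ} (hp : 0 ≤ p) (μ : Measure X) [IsProbabilityMeasure μ]
    (m : X) :
    ENNReal.ofReal (wassW c p μ (Measure.dirac m)) ≤
      (∫⁻ x, ENNReal.ofReal (c x m) ^ p ∂μ) ^ (1 / p) := by
  refine (ofReal_wassW_le hc hp (prod_mem_couplings μ (Measure.dirac m))).trans ?_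
  gcongr
  rw [Measure.prod_dirac]
  refine (lintegral_map_le _ _).trans_eq ?_
  simp_rw [ENNReal.ofReal_rpow_of_nonneg (hc _ _) hp]

lemma ofReal_mul_wassW_dirac_le {X : Type*} [MeasurableSpace X] {c : X → X → ℝ}
    (hc : ∀ x y, 0 ≤ c x y) {p : ℝ} (hp : 0 < p) {a : ℝ} (ha : 0 ≤ a) (μ : Measure X)
    [IsProbabilityMeasure μ] (m : X) :
    ENNReal.ofReal (a * wassW c p μ (Measure.dirac m)) ≤
      (∫⁻ x, ENNReal.ofReal (a * c x m) ^ p ∂μ) ^ (1 / p) := by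
  simp_rw [ENNReal.ofReal_mul ha, ENNReal.mul_rpow_of_nonneg _ _ hp.le]
  rw [lintegral_const_mul' _ _ (ENNReal.rpow_ne_top_of_nonneg hp.le ENNReal.ofReal_ne_top),
    ENNReal.mul_rpow_of_nonneg _ _ (by positivity), one_div, ENNReal.rpow_rpow_inv hp.ne',
    ← one_div]
  gcongr
  exact ofReal_wassW_dirac_le hc hp.le μ m

variable {S : Type*} [MetricSpace S] [SecondCountableTopology S] [MeasurableSpace S]
  [BorelSpace S] {p : ℝ} {μ ν : Measure S}

lemma integral_dist_rpow_eq_toReal_lpEDist (hp : 0 ≤ p) (γ : Measure (S × S)) :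
    (∫ z, dist z.1 z.2 ^ p ∂γ) ^ (1 / p) = (lpEDist p γ Prod.fst Prod.snd).toReal := by
  rw [lpEDist, ← ENNReal.toReal_rpow, integral_eq_lintegral_of_nonneg_ae
    (.of_forall fun z => Real.rpow_nonneg dist_nonneg p)
    (measurable_dist.pow_const p).aestronglyMeasurable]
  simp_rw [edist_dist, ENNReal.ofReal_rpow_of_nonneg dist_nonneg hp]

lemma ofReal_wassW_dist (hp : 1 ≤ p) (hμ : MemWp p μ) (hν : MemWp p ν) :
    ENNReal.ofReal (wassW (fun x y => dist x y) p μ ν) = wassersteinEDist p μ ν := by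
  have hp0 : 0 ≤ p := zero_le_one.trans hp
  have := hμ.1
  have := hν.1
  have htop (γ : couplings μ ν) : lpEDist p (γ : Measure (S × S)) Prod.fst Prod.snd ≠ ⊤ :=
    lpEDist_ne_top_of_mem_couplings hp hμ hν γ.2
  have hne : wassersteinEDist p μ ν ≠ ⊤ :=
    ne_top_of_le_ne_top (htop ⟨_, prod_mem_couplings μ ν⟩) (iInf_le _ _)
  have hwass : wassW (fun x y => dist x y) p μ ν = (wassersteinEDist p μ ν).toReal := by
    rw [wassersteinEDist, ENNReal.toReal_iInf htop, iInf, wassW]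
    congr 1
    ext r
    simp only [integral_dist_rpow_eq_toReal_lpEDist hp0, Set.mem_ofPred_eq, Set.mem_range,
      Subtype.exists, couplings, exists_prop, and_assoc, @eq_comm _ r]
  rw [hwass, ENNReal.ofReal_toReal hne]

theorem exists_measurable_eq_ofReal_wassW (hp : 1 ≤ p) :
    ∃ V : Measure S × Measure S → ℝ≥0∞, Measurable V ∧
      ∀ μ ν, MemWp p μ → MemWp p ν →
        V (μ, ν) = ENNReal.ofReal (wassW (fun x y => dist x y) p μ ν) := by
  rcases isEmpty_or_nonempty S with hS | hS
  · exact ⟨0, measurable_const, fun _ _ ⟨_, x, _⟩ _ => isEmptyElim x⟩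
  · obtain ⟨V, hV, hVW⟩ := exists_measurable_eq_wassersteinEDist (S := S) hp
    exact ⟨V, hV, fun μ ν hμ hν => by rw [hVW μ ν hμ hν, ofReal_wassW_dist hp hμ hν]⟩

end WassW

section ConditionalLaws

variable {Ω 𝓧 𝓨 : Type*} {mΩ : MeasurableSpace Ω} [MeasurableSpace 𝓧] [MeasurableSpace 𝓨]
  {P : Measure Ω} {X : Ω → 𝓧} {Y : Ω → 𝓨} {κ : Kernel 𝓧 𝓨}

lemma hasCondDistrib_of_forall_measure_inter_preimage [IsFiniteMeasure P] [IsFiniteKernel κ]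
    (hX : Measurable X) (hY : Measurable Y)
    (h : ∀ A B, MeasurableSet A → MeasurableSet B →
      P (X ⁻¹' A ∩ Y ⁻¹' B) = ∫⁻ ω in X ⁻¹' A, κ (X ω) B ∂P) :
    HasCondDistrib Y X κ P := by
  refine ⟨(hX.prodMk hY).aemeasurable, Measure.ext_prod fun {A B} hA hB => ?_⟩
  rw [Measure.map_apply (hX.prodMk hY) (hA.prod hB), Measure.compProd_apply_prod hA hB,
    setLIntegral_map hA (κ.measurable_coe hB) hX, ← h A B hA hB]
  rfl

variable [IsFiniteMeasure P] [IsFiniteKernel κ]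

lemma setLIntegral_of_hasCondDistrib (h : HasCondDistrib Y X κ P) (hX : Measurable X)
    {f : 𝓧 × 𝓨 → ℝ≥0∞} (hf : Measurable f) {A : Set 𝓧} (hA : MeasurableSet A) :
    ∫⁻ ω in X ⁻¹' A, ∫⁻ y, f (X ω, y) ∂κ (X ω) ∂P = ∫⁻ ω in X ⁻¹' A, f (X ω, Y ω) ∂P := by
  calc ∫⁻ ω in X ⁻¹' A, ∫⁻ y, f (X ω, y) ∂κ (X ω) ∂P
      = ∫⁻ z in A ×ˢ Set.univ, f z ∂(P.map X ⊗ₘ κ) := by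
        simp only [Measure.setLIntegral_compProd hf hA .univ, Measure.restrict_univ,
          setLIntegral_map hA hf.lintegral_kernel_prod_right' hX]
    _ = ∫⁻ ω in X ⁻¹' A, f (X ω, Y ω) ∂P := by
        rw [← h.map_eq, ← lintegral_indicator (hA.prod .univ), lintegral_map'
          (hf.indicator (hA.prod .univ)).aemeasurable h.aemeasurable, ← lintegral_indicator (hX hA)]
        refine lintegral_congr fun ω => ?_
        by_cases hω : X ω ∈ A <;> simp [hω]

lemma lintegral_of_hasCondDistrib (h : HasCondDistrib Y X κ P) (hX : Measurable X)
    {f : 𝓧 × 𝓨 → ℝ≥0∞} (hf : Measurable f) :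
    ∫⁻ ω, ∫⁻ y, f (X ω, y) ∂κ (X ω) ∂P = ∫⁻ ω, f (X ω, Y ω) ∂P := by
  simpa using setLIntegral_of_hasCondDistrib h hX hf .univ

lemma lintegral_ae_eq_condLExp_of_hasCondDistrib (h : HasCondDistrib Y X κ P) (hX : Measurable X)
    {f : 𝓧 × 𝓨 → ℝ≥0∞} (hf : Measurable f) :
    (fun ω => ∫⁻ y, f (X ω, y) ∂κ (X ω)) =ᵐ[P]
      P⁻[fun ω => f (X ω, Y ω) | MeasurableSpace.comap X inferInstance] := by
  refine ae_eq_condLExp hX.comap_le P _ ?_ ?_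
  · exact hf.lintegral_kernel_prod_right'.comp (comap_measurable X)
  · rintro _ ⟨A, hA, rfl⟩
    exact setLIntegral_of_hasCondDistrib h hX hf hA

lemma ae_ae_iff_of_hasCondDistrib (h : HasCondDistrib Y X κ P) {q : 𝓧 × 𝓨 → Prop}
    (hq : MeasurableSet {z | q z}) :
    (∀ᵐ x ∂P.map X, ∀ᵐ y ∂κ x, q (x, y)) ↔ ∀ᵐ ω ∂P, q (X ω, Y ω) := by
  rw [← Measure.ae_compProd_iff hq, ← h.map_eq, ae_map_iff h.aemeasurable hq]

lemma measurable_essSup_kernel {f : 𝓧 × 𝓨 → ℝ≥0∞} (hf : Measurable f) :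
    Measurable fun x => essSup (fun y => f (x, y)) (κ x) := by
  refine measurable_of_Iic fun t => ?_
  have hlevel : (fun x => essSup (fun y => f (x, y)) (κ x)) ⁻¹' Set.Iic t =
      (fun x => κ x {y | t < f (x, y)}) ⁻¹' {0} := by
    ext x
    have hae : κ x {y | t < f (x, y)} = 0 ↔ ∀ᵐ y ∂κ x, f (x, y) ≤ t := by simp [ae_iff]
    rw [Set.mem_preimage, Set.mem_preimage, Set.mem_singleton_iff, hae]
    exact ⟨fun hx => (ENNReal.ae_le_essSup _).mono fun y hy => hy.trans hx,
      fun hx => essSup_le_of_ae_le t hx⟩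
  rw [hlevel]
  exact Kernel.measurable_kernel_prodMk_left (measurableSet_lt measurable_const hf)
    (measurableSet_singleton 0)

lemma ae_le_of_hasCondDistrib (h : HasCondDistrib Y X κ P) {f : 𝓧 × 𝓨 → ℝ≥0∞}
    (hf : Measurable f) {Z : Ω → ℝ≥0∞}
    (hZ : ∀ᵐ ω ∂P, ∀ᵐ y ∂κ (X ω), f (X ω, y) ≤ Z ω) : ∀ᵐ ω ∂P, f (X ω, Y ω) ≤ Z ω := by
  let g (x : 𝓧) : ℝ≥0∞ := essSup (fun y => f (x, y)) (κ x)
  have hle : ∀ᵐ x ∂P.map X, ∀ᵐ y ∂κ x, f (x, y) ≤ g x :=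
    .of_forall fun x => ENNReal.ae_le_essSup _
  have hess : ∀ᵐ ω ∂P, f (X ω, Y ω) ≤ g (X ω) :=
    (ae_ae_iff_of_hasCondDistrib (q := fun z => f z ≤ g z.1) h
      (measurableSet_le hf ((measurable_essSup_kernel hf).comp measurable_fst))).1 hle
  filter_upwards [hess, hZ] with ω hω hZω
  exact hω.trans (essSup_le_of_ae_le _ hZω)

end ConditionalLaws

section Martingale

variable {Ω : Type*} {m0 : MeasurableSpace Ω} {P : Measure Ω} [IsFiniteMeasure P]
  {ℱ : Filtration ℕ m0}

lemma tendsto_ae_condLExp {Z : Ω → ℝ≥0∞} (hZ : Measurable[⨆ n, ℱ n] Z)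
    (hfin : ∫⁻ ω, Z ω ∂P ≠ ⊤) :
    ∀ᵐ ω ∂P, Tendsto (fun n => P⁻[Z | ℱ n] ω) atTop (𝓝 (Z ω)) := by
  have hZ0 : AEMeasurable Z P := (hZ.mono (iSup_le ℱ.le) le_rfl).aemeasurable
  have hlim : ∀ᵐ ω ∂P, Tendsto (fun n => (P[fun ω => (Z ω).toReal | ℱ n]) ω) atTop
      (𝓝 (Z ω).toReal) :=
    (integrable_toReal_of_lintegral_ne_top hZ0 hfin).tendsto_ae_condExp
      hZ.ennreal_toReal.stronglyMeasurable
  filter_upwards [hlim, ae_all_iff.2 fun n => toReal_condLExp (ℱ n) hZ0 hfin,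
    ae_all_iff.2 fun n => condLExp_ne_top (mΩ := ℱ n) hfin, ae_lt_top' hZ0 hfin]
    with ω hlimω hcond hcondtop htop
  simp_rw [← hcond] at hlimω
  exact (ENNReal.tendsto_toReal_iff hcondtop htop.ne).1 hlimω

/-- Replacing `X n` by the tail supremum `⨆ k, X (k + m)`, which does not depend on `n`, reduces
the claim to the convergence of the martingale closed by that supremum. -/
theorem ae_limsup_condLExp_le_limsup {X : ℕ → Ω → ℝ≥0∞} (hX : ∀ n, Measurable[⨆ n, ℱ n] (X n))
    (hfin : ∫⁻ ω, ⨆ n, X n ω ∂P ≠ ⊤) :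
    ∀ᵐ ω ∂P, limsup (fun n => P⁻[X n | ℱ n] ω) atTop ≤ limsup (fun n => X n ω) atTop := by
  let Z (m : ℕ) (ω : Ω) : ℝ≥0∞ := ⨆ k, X (k + m) ω
  have hZfin (m : ℕ) : ∫⁻ ω, Z m ω ∂P ≠ ⊤ := ne_top_of_le_ne_top hfin
    (lintegral_mono fun ω => iSup_le fun k => le_iSup (fun n => X n ω) (k + m))
  have hlim : ∀ᵐ ω ∂P, ∀ m, Tendsto (fun n => P⁻[Z m | ℱ n] ω) atTop (𝓝 (Z m ω)) :=
    ae_all_iff.2 fun m => tendsto_ae_condLExp (.iSup fun k => hX (k + m)) (hZfin m)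
  have hmono : ∀ᵐ ω ∂P, ∀ m k, P⁻[X (k + m) | ℱ (k + m)] ω ≤ P⁻[Z m | ℱ (k + m)] ω :=
    ae_all_iff.2 fun m => ae_all_iff.2 fun k => condLExp_mono <| .of_forall fun ω =>
      le_iSup (fun k => X (k + m) ω) k
  filter_upwards [hlim, hmono] with ω hlimω hmonoω
  rw [limsup_eq_iInf_iSup_of_nat' (u := fun n => X n ω)]
  refine le_iInf fun m => ?_
  change _ ≤ Z m ω
  rw [← (hlimω m).limsup_eq, ← limsup_nat_add _ m, ← limsup_nat_add (fun n => P⁻[Z m | ℱ n] ω) m]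
  exact limsup_le_limsup (.of_forall (hmonoω m))

theorem ae_limsup_lintegral_le_limsup_of_hasCondDistrib {Θ : Type*} [MeasurableSpace Θ]
    {E : ℕ → Type*} [∀ n, MeasurableSpace (E n)] {T : Ω → Θ} {ξ : ∀ n, Ω → E n}
    {κ : ∀ n, Kernel (E n) Θ} [∀ n, IsFiniteKernel (κ n)]
    (hℱ : ∀ n, ℱ n = MeasurableSpace.comap (ξ n) inferInstance) (hℱ_top : ⨆ n, ℱ n = m0)
    (hT : Measurable T) (hκ : ∀ n, HasCondDistrib T (ξ n) (κ n) P)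
    {f : ∀ n, E n × Θ → ℝ≥0∞} (hf : ∀ n, Measurable (f n))
    (hfin : ∫⁻ ω, ⨆ n, f n (ξ n ω, T ω) ∂P ≠ ⊤) :
    ∀ᵐ ω ∂P, limsup (fun n => ∫⁻ θ, f n (ξ n ω, θ) ∂κ n (ξ n ω)) atTop ≤
      limsup (fun n => f n (ξ n ω, T ω)) atTop := by
  have hξ (n : ℕ) : Measurable (ξ n) := measurable_iff_comap_le.2 (hℱ n ▸ ℱ.le n)
  have hcond : ∀ᵐ ω ∂P, ∀ n, ∫⁻ θ, f n (ξ n ω, θ) ∂κ n (ξ n ω) =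
      P⁻[fun ω => f n (ξ n ω, T ω) | ℱ n] ω := ae_all_iff.2 fun n => by
    rw [hℱ n]
    exact lintegral_ae_eq_condLExp_of_hasCondDistrib (hκ n) (hξ n) (hf n)
  have hX (n : ℕ) : Measurable[⨆ n, ℱ n] fun ω => f n (ξ n ω, T ω) := by
    rw [hℱ_top]
    exact (hf n).comp ((hξ n).prodMk hT)
  filter_upwards [ae_limsup_condLExp_le_limsup hX hfin, hcond] with ω hlim hcondω
  simpa only [hcondω] using hlim

end Martingale

section ProductMeasure

variable {S : Type*} [MeasurableSpace S]

/-- The first `n` coordinates `ξ^(n)` of a sequence. -/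
def firstCoords (n : ℕ) (ω : ℕ → S) : Fin n → S := fun i => ω i

lemma measurable_firstCoords (n : ℕ) : Measurable (firstCoords (S := S) n) :=
  measurable_pi_lambda _ fun i => measurable_pi_apply (i : ℕ)

lemma piLE_eq_comap_firstCoords (n : ℕ) :
    Filtration.piLE (X := fun _ : ℕ => S) n =
      MeasurableSpace.comap (firstCoords (n + 1)) inferInstance := by
  have hfirst : Measurable fun (x : Set.Iic n → S) (i : Fin (n + 1)) =>
      x ⟨i, Nat.le_of_lt_succ i.2⟩ := measurable_pi_lambda _ fun i => measurable_pi_apply _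
  have hIic : Measurable fun (v : Fin (n + 1) → S) (i : Set.Iic n) =>
      v ⟨i, Nat.lt_succ_of_le i.2⟩ := measurable_pi_lambda _ fun i => measurable_pi_apply _
  exact le_antisymm (hIic.comp (comap_measurable (firstCoords (n + 1)))).comap_le
    (hfirst.comp (comap_measurable (Preorder.restrictLe (π := fun _ : ℕ => S) n))).comap_le

lemma iSup_piLE : ⨆ n, Filtration.piLE (X := fun _ : ℕ => S) n = MeasurableSpace.pi := by
  refine le_antisymm (iSup_le Filtration.piLE.le) (iSup_le fun i => ?_)
  refine le_trans ?_ (le_iSup _ i)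
  exact measurable_iff_comap_le.1 ((measurable_pi_apply (⟨i, Set.self_mem_Iic⟩ : Set.Iic i)).comp
    (comap_measurable (Preorder.restrictLe i)))

lemma eq_infinitePi_of_firstCoords {𝔭 : Measure S} [IsProbabilityMeasure 𝔭]
    {ν : Measure (ℕ → S)}
    (h : ∀ (n : ℕ) (A : Fin n → Set S), (∀ i, MeasurableSet (A i)) →
      ν {ω | ∀ i, firstCoords n ω i ∈ A i} = ∏ i, 𝔭 (A i)) :
    ν = Measure.infinitePi fun _ => 𝔭 := by
  classical
  refine Measure.eq_infinitePi _ fun s t ht => ?_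
  let A (i : ℕ) : Set S := if i ∈ s then t i else Set.univ
  have hs : s ⊆ Finset.range (s.sup id + 1) := s.subset_range_sup_succ
  have hcyl : (s : Set ℕ).pi t = {ω | ∀ i, firstCoords (s.sup id + 1) ω i ∈ A i.1} := by
    ext ω
    refine ⟨fun hω i => ?_, fun hω i hi => ?_⟩
    · by_cases hi : (i : ℕ) ∈ s
      · simpa only [A, if_pos hi, firstCoords] using hω i hi
      · simp only [A, if_neg hi, Set.mem_univ]
    · simpa only [A, if_pos (show i ∈ s from hi), firstCoords] using
        hω ⟨i, Finset.mem_range.1 (hs hi)⟩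
  rw [hcyl, h _ (fun i => A i) fun i => by dsimp only [A]; split_ifs <;> simp [ht],
    Fin.prod_univ_eq_prod_range (fun i => 𝔭 (A i)), ← Finset.prod_subset hs]
  · exact Finset.prod_congr rfl fun i hi => by simp [A, hi]
  · exact fun i _ hi => by simp [A, hi]

lemma infinitePi_of_not_isProbabilityMeasure {𝔭 : Measure S} (h𝔭 : ¬ IsProbabilityMeasure 𝔭) :
    Measure.infinitePi (fun _ : ℕ => 𝔭) = 0 := by
  rw [Measure.infinitePi, dif_neg fun h => h𝔭 (h 0)]

lemma infinitePi_univ_le_one (𝔭 : Measure S) :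
    Measure.infinitePi (fun _ : ℕ => 𝔭) Set.univ ≤ 1 := by
  by_cases h𝔭 : IsProbabilityMeasure 𝔭
  · exact measure_univ.le
  · simp [infinitePi_of_not_isProbabilityMeasure h𝔭]

lemma infinitePi_pi_eq_ite (𝔭 : Measure S) {s : Finset ℕ} {t : ℕ → Set S}
    (ht : ∀ i ∈ s, MeasurableSet (t i)) :
    Measure.infinitePi (fun _ : ℕ => 𝔭) ((s : Set ℕ).pi t) =
      if 𝔭 Set.univ = 1 then ∏ i ∈ s, 𝔭 (t i) else 0 := by
  split_ifs with h𝔭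
  · have : IsProbabilityMeasure 𝔭 := ⟨h𝔭⟩
    exact Measure.infinitePi_pi _ ht
  · rw [infinitePi_of_not_isProbabilityMeasure fun h => h𝔭 h.measure_univ]
    rfl

lemma measurable_infinitePi :
    Measurable fun 𝔭 : Measure S => Measure.infinitePi fun _ : ℕ => 𝔭 := by
  have (𝔭 : Measure S) : IsFiniteMeasure (Measure.infinitePi fun _ : ℕ => 𝔭) :=
    ⟨(infinitePi_univ_le_one 𝔭).trans_lt ENNReal.one_lt_top⟩
  have hpi (s : Finset ℕ) (t : ℕ → Set S) (ht : ∀ i ∈ s, MeasurableSet (t i)) :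
      Measurable fun 𝔭 : Measure S => Measure.infinitePi (fun _ => 𝔭) ((s : Set ℕ).pi t) := by
    simp_rw [infinitePi_pi_eq_ite _ ht]
    refine .ite (Measure.measurable_coe .univ (measurableSet_singleton 1)) ?_ measurable_const
    exact Finset.measurable_fun_prod _ fun i hi => Measure.measurable_coe (ht i hi)
  refine Measurable.measure_of_isPiSystem generateFrom_squareCylinders.symm
    (isPiSystem_squareCylinders (fun _ => MeasurableSpace.isPiSystem_measurableSet) (by simp))
    ?_ ?_
  · rintro _ ⟨s, t, ht, rfl⟩
    exact hpi s t fun i _ => ht i (Set.mem_univ i)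
  · simpa using hpi ∅ (fun _ => Set.univ) (by simp)

/-- The product measure `𝔭 ↦ 𝔭^∞` as a kernel. It is zero at every `𝔭` that is not a probability
measure, the junk value of `Measure.infinitePi`. -/
def iidKernel : Kernel (Measure S) (ℕ → S) :=
  ⟨fun 𝔭 => Measure.infinitePi fun _ => 𝔭, measurable_infinitePi⟩

instance : IsFiniteKernel (iidKernel (S := S)) :=
  ⟨1, ENNReal.one_lt_top, infinitePi_univ_le_one⟩

end ProductMeasure

section PosteriorRisk

variable {S Θ : Type*} [MeasurableSpace S] [MeasurableSpace Θ] {ρ : Measure (ℕ → S)}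
  [IsFiniteMeasure ρ] {T : (ℕ → S) → Θ}

theorem ae_limsup_posterior_risk_le {model : Kernel Θ (ℕ → S)} [IsFiniteKernel model]
    {post : ∀ n, Kernel (Fin n → S) Θ} [∀ n, IsFiniteKernel (post n)] (hT : Measurable T)
    (hmodel : HasCondDistrib id T model ρ)
    (hpost : ∀ n, HasCondDistrib T (firstCoords n) (post n) ρ)
    {loss : ∀ n, (Fin n → S) × Θ → ℝ≥0∞} (hloss : ∀ n, Measurable (loss n))
    {C Z : (ℕ → S) → ℝ≥0∞} (hC : ∫⁻ ω, C ω ∂ρ ≠ ⊤)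
    (hsup : ∀ᵐ ω ∂ρ, ∫⁻ ω', ⨆ n, loss (n + 1) (firstCoords (n + 1) ω', T ω) ∂model (T ω) ≤ C ω)
    (hlimsup : ∀ᵐ ω ∂ρ, ∀ᵐ ω' ∂model (T ω),
      limsup (fun n => loss (n + 1) (firstCoords (n + 1) ω', T ω)) atTop ≤ Z ω) :
    ∀ᵐ ω ∂ρ, limsup (fun n => ∫⁻ θ, loss (n + 1) (firstCoords (n + 1) ω, θ)
      ∂post (n + 1) (firstCoords (n + 1) ω)) atTop ≤ Z ω := by
  have hmeas (n : ℕ) : Measurable fun z : Θ × (ℕ → S) =>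
      loss (n + 1) (firstCoords (n + 1) z.2, z.1) :=
    (hloss (n + 1)).comp (((measurable_firstCoords _).comp measurable_snd).prodMk measurable_fst)
  have hfin : ∫⁻ ω, ⨆ n, loss (n + 1) (firstCoords (n + 1) ω, T ω) ∂ρ ≠ ⊤ := by
    have hprior := lintegral_of_hasCondDistrib hmodel hT (.iSup hmeas)
    exact hprior ▸ ne_top_of_le_ne_top hC (lintegral_mono_ae hsup)
  have hbound : ∀ᵐ ω ∂ρ,
      limsup (fun n => loss (n + 1) (firstCoords (n + 1) ω, T ω)) atTop ≤ Z ω :=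
    ae_le_of_hasCondDistrib hmodel (Measurable.limsup hmeas) hlimsup
  have hHunt := ae_limsup_lintegral_le_limsup_of_hasCondDistrib piLE_eq_comap_firstCoords iSup_piLE
    hT (fun n => hpost (n + 1)) (fun n => hloss (n + 1)) hfin
  filter_upwards [hHunt, hbound] with ω hω hZω using hω.trans hZω

end PosteriorRisk

lemma limsup_ennreal_rpow (u : ℕ → ℝ≥0∞) {y : ℝ} (hy : 0 < y) :
    limsup (fun n => u n ^ y) atTop = limsup u atTop ^ y := by
  simpa using ((ENNReal.orderIsoRpow y hy).limsup_apply (f := atTop) (u := u)).symm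

section WassersteinRisk

variable {S : Type*} [MetricSpace S] [SecondCountableTopology S] [MeasurableSpace S]
  [BorelSpace S] {p : ℝ}

lemma ae_ae_memWp_of_hasCondDistrib {ρ : Measure (ℕ → S)} [IsFiniteMeasure ρ]
    {ptilde : (ℕ → S) → Measure S} {n : ℕ} {post : Kernel (Fin n → S) (Measure S)}
    [IsFiniteKernel post] (hp : 1 ≤ p) (hpost : HasCondDistrib ptilde (firstCoords n) post ρ)
    (hptildeWp : ∀ᵐ ω ∂ρ, MemWp p (ptilde ω)) :
    ∀ᵐ ω ∂ρ, ∀ᵐ μ ∂post (firstCoords n ω), MemWp p μ :=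
  ae_of_ae_map (measurable_firstCoords n).aemeasurable
    ((ae_ae_iff_of_hasCondDistrib (q := fun z => MemWp p z.2) hpost
      (measurable_snd (measurableSet_memWp hp))).2 hptildeWp)

lemma exists_measurable_eq_ofReal_mul_wassW_rpow (hp : 1 ≤ p) {E : Type*} [MeasurableSpace E]
    {m : E → Measure S} (hm : Measurable m) (hmWp : ∀ v, MemWp p (m v)) {a : ℝ} (ha : 0 ≤ a) :
    ∃ loss : E × Measure S → ℝ≥0∞, Measurable loss ∧ ∀ v μ, MemWp p μ →
      loss (v, μ) = ENNReal.ofReal (a * wassW (fun u v => dist u v) p μ (m v)) ^ p := by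
  obtain ⟨V, hV_meas, hV⟩ := exists_measurable_eq_ofReal_wassW (S := S) hp
  refine ⟨fun z => (ENNReal.ofReal a * V (z.2, m z.1)) ^ p, ?_, fun v μ hμ => ?_⟩
  · exact ((hV_meas.comp (measurable_snd.prodMk (hm.comp measurable_fst))).const_mul _).pow_const p
  · simp only [hV μ _ hμ (hmWp v), ENNReal.ofReal_mul ha]

theorem ae_limsup_wassW_posterior_dirac_le {ρ : Measure (ℕ → S)} [IsFiniteMeasure ρ]
    {ptilde : (ℕ → S) → Measure S} (hptilde : Measurable ptilde)
    {model : Kernel (Measure S) (ℕ → S)} [IsFiniteKernel model]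
    (hmodel : HasCondDistrib id ptilde model ρ)
    {post : ∀ n, Kernel (Fin n → S) (Measure S)} [∀ n, IsMarkovKernel (post n)]
    (hpost : ∀ n, HasCondDistrib ptilde (firstCoords n) (post n) ρ) (hp : 1 ≤ p)
    (hptildeWp : ∀ᵐ ω ∂ρ, MemWp p (ptilde ω))
    {phat : ∀ n, (Fin n → S) → Measure S} (hphat : ∀ n, Measurable (phat n))
    (hphatWp : ∀ n v, MemWp p (phat n v)) {b : ℕ → ℝ} (hb : ∀ n, 0 ≤ b n)
    {C Y : (ℕ → S) → ℝ≥0∞} (hC : ∫⁻ ω, C ω ∂ρ ≠ ⊤)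
    (hsup : ∀ᵐ ω ∂ρ, ∫⁻ ω', ⨆ n : ℕ, ENNReal.ofReal
      ((b (n + 1) * wassW (fun u v => dist u v) p (ptilde ω)
        (phat (n + 1) (firstCoords (n + 1) ω'))) ^ p) ∂model (ptilde ω) ≤ C ω)
    (hlimsup : ∀ᵐ ω ∂ρ, ∀ᵐ ω' ∂model (ptilde ω), limsup (fun n : ℕ => ENNReal.ofReal
      (b (n + 1) * wassW (fun u v => dist u v) p (ptilde ω)
        (phat (n + 1) (firstCoords (n + 1) ω')))) atTop ≤ Y ω) :
    ∀ᵐ ω ∂ρ, limsup (fun n : ℕ => ENNReal.ofReal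
      (b n * wassW (fun μ ν => wassW (fun u v => dist u v) p μ ν) p (post n (firstCoords n ω))
        (Measure.dirac (phat n (firstCoords n ω))))) atTop ≤ Y ω := by
  have hp0 : 0 < p := by linarith
  have hW : ∀ μ ν : Measure S, 0 ≤ wassW (fun u v => dist u v) p μ ν :=
    wassW_nonneg (fun _ _ => dist_nonneg) p
  choose loss hloss_meas hloss using fun n =>
    exists_measurable_eq_ofReal_mul_wassW_rpow hp (hphat n) (hphatWp n) (hb n)
  have hrisk := ae_limsup_posterior_risk_le (Z := fun ω => Y ω ^ p) hptilde hmodel hpost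
    hloss_meas hC
    (by
      filter_upwards [hsup, hptildeWp] with ω hω hWp
      simpa only [hloss _ _ _ hWp,
        ENNReal.ofReal_rpow_of_nonneg (mul_nonneg (hb _) (hW _ _)) hp0.le] using hω)
    (by
      filter_upwards [hlimsup, hptildeWp] with ω hω hWp
      filter_upwards [hω] with ω' hω'
      simpa only [hloss _ _ _ hWp, limsup_ennreal_rpow _ hp0] using
        ENNReal.rpow_le_rpow hω' hp0.le)
  have hpostWp : ∀ᵐ ω ∂ρ, ∀ n, ∀ᵐ μ ∂post n (firstCoords n ω), MemWp p μ :=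
    ae_all_iff.2 fun n => ae_ae_memWp_of_hasCondDistrib hp (hpost n) hptildeWp
  filter_upwards [hrisk, hpostWp] with ω hω hWp
  have hdist (n : ℕ) : ENNReal.ofReal (b n * wassW (wassW (fun u v => dist u v) p) p
      (post n (firstCoords n ω)) (Measure.dirac (phat n (firstCoords n ω)))) ≤
      (∫⁻ μ, loss n (firstCoords n ω, μ) ∂post n (firstCoords n ω)) ^ (1 / p) := by
    rw [lintegral_congr_ae ((hWp n).mono fun μ hμ => hloss n (firstCoords n ω) μ hμ)]
    exact ofReal_mul_wassW_dirac_le hW hp0 (hb n) _ _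
  rw [← limsup_nat_add _ 1]
  refine (limsup_le_limsup (.of_forall fun n => hdist (n + 1))).trans ?_
  rwa [limsup_ennreal_rpow _ (by positivity), one_div, ENNReal.rpow_inv_le_iff hp0]

end WassersteinRisk

theorem posterior_merging_general
    {S : Type*} [MetricSpace S] [TopologicalSpace.SeparableSpace S]
    [MeasurableSpace S] [BorelSpace S]
    (iid : Measure S → Measure (ℕ → S))
    (hiid : ∀ 𝔭 : Measure S, IsProbabilityMeasure 𝔭 →
      ∀ (n : ℕ) (A : Fin n → Set S), (∀ i, MeasurableSet (A i)) →
        iid 𝔭 {ω | ∀ i : Fin n, ω (i : ℕ) ∈ A i} = ∏ i, 𝔭 (A i))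
    (ρ : Measure (ℕ → S)) [IsFiniteMeasure ρ]
    (ptilde : (ℕ → S) → Measure S) (hptilde_meas : Measurable ptilde)
    (hdirect : ∀ C : Set (ℕ → S), MeasurableSet C → ∀ B : Set (Measure S), MeasurableSet B →
      ρ (C ∩ ptilde ⁻¹' B) = ∫⁻ ω in ptilde ⁻¹' B, iid (ptilde ω) C ∂ρ)
    (p : ℝ) (hp : 1 ≤ p)
    (phat : (n : ℕ) → (Fin n → S) → Measure S)
    (hphat_meas : ∀ n, Measurable (phat n))
    (hphatWp : ∀ n v, MemWp p (phat n v))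
    (hptildeWp : ∀ᵐ ω ∂ρ, MemWp p (ptilde ω))
    (post : (n : ℕ) → (Fin n → S) → Measure (Measure S))
    (hpost_prob : ∀ n v, IsProbabilityMeasure (post n v))
    (hpost_meas : ∀ n, Measurable (post n))
    (hpost : ∀ (n : ℕ) (A : Set (Fin n → S)), MeasurableSet A →
      ∀ B : Set (Measure S), MeasurableSet B →
        ρ {ω | (fun i : Fin n => ω (i : ℕ)) ∈ A ∧ ptilde ω ∈ B}
          = ∫⁻ ω in {ω | (fun i : Fin n => ω (i : ℕ)) ∈ A},
              post n (fun i : Fin n => ω (i : ℕ)) B ∂ρ)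
    (b : ℕ → ℝ) (hb : ∀ n, 0 ≤ b n)
    (Cp Yp : Measure S → ℝ)
    (hCp_int : Integrable (fun ω => Cp (ptilde ω)) ρ)
    (hsup : ∀ᵐ ω ∂ρ, ∫⁻ ω', ⨆ n : ℕ, ENNReal.ofReal
        ((b (n + 1) * wassW (fun u v => dist u v) p (ptilde ω)
          (phat (n + 1) (fun i : Fin (n + 1) => ω' (i : ℕ)))) ^ p) ∂(iid (ptilde ω))
        ≤ ENNReal.ofReal (Cp (ptilde ω)))
    (hlimsup : ∀ᵐ ω ∂ρ, ∀ᵐ ω' ∂(iid (ptilde ω)),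
      limsup (fun n : ℕ => ENNReal.ofReal
          (b (n + 1) * wassW (fun u v => dist u v) p (ptilde ω)
            (phat (n + 1) (fun i : Fin (n + 1) => ω' (i : ℕ))))) atTop
        ≤ ENNReal.ofReal (Yp (ptilde ω))) :
    ∀ᵐ ω ∂ρ, limsup (fun n : ℕ => ENNReal.ofReal
        (b n * wassW (fun μ ν => wassW (fun u v => dist u v) p μ ν) p
          (post n (fun i : Fin n => ω (i : ℕ)))
          (Measure.dirac (phat n (fun i : Fin n => ω (i : ℕ)))))) atTop
      ≤ ENNReal.ofReal (Yp (ptilde ω)) := by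
  have : SecondCountableTopology S := UniformSpace.secondCountable_of_separable S
  have hiid_eq : ∀ᵐ ω ∂ρ, iid (ptilde ω) = iidKernel (ptilde ω) := hptildeWp.mono fun ω hω =>
    have := hω.1
    eq_infinitePi_of_firstCoords (hiid _ this)
  have hmodel : HasCondDistrib id ptilde iidKernel ρ :=
    hasCondDistrib_of_forall_measure_inter_preimage hptilde_meas measurable_id fun B C hB hC => by
      rw [Set.inter_comm]
      refine (hdirect C hC B hB).trans (lintegral_congr_ae (ae_restrict_of_ae ?_))
      filter_upwards [hiid_eq] with ω hω using by rw [hω]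
  let postKernel (n : ℕ) : Kernel (Fin n → S) (Measure S) := ⟨post n, hpost_meas n⟩
  have (n : ℕ) : IsMarkovKernel (postKernel n) := ⟨hpost_prob n⟩
  have hpostKernel (n : ℕ) : HasCondDistrib ptilde (firstCoords n) (postKernel n) ρ :=
    hasCondDistrib_of_forall_measure_inter_preimage (measurable_firstCoords n) hptilde_meas
      fun A B hA hB => hpost n A hA B hB
  refine ae_limsup_wassW_posterior_dirac_le hptilde_meas hmodel hpostKernel hp hptildeWp
    hphat_meas hphatWp hb hCp_int.lintegral_lt_top.ne ?_ ?_
  · filter_upwards [hsup, hiid_eq] with ω hω hiidω using hiidω ▸ hω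
  · filter_upwards [hlimsup, hiid_eq] with ω hω hiidω using hiidω ▸ hω

/-- merging of the posterior distributions with the point masses at
the estimators `p̂_n`: under uniform (`hMain1`) and almost-sure (`hMain2`)
bounds for the i.i.d. approximation problem, holding with `ρ`-probability one
for the directing measure `p̃`, one has
`limsup_n b_n d^{(p)}_{[[S]_p]}( π(ξ^{(n)}), δ_{p̂_n} ) ≤ Y_p(p̃)` a.s.-`ρ`. -/
theorem posterior_merging
    {S : Type*} [MetricSpace S] [TopologicalSpace.SeparableSpace S]
    [MeasurableSpace S] [BorelSpace S]
    (hRadon : ∀ μ : Measure S, IsProbabilityMeasure μ → μ.InnerRegular)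
    -- the product-measure map `𝔭 ↦ 𝔭^∞`
    (iid : Measure S → Measure (ℕ → S))
    (hiid : ∀ 𝔭 : Measure S, IsProbabilityMeasure 𝔭 →
      IsProbabilityMeasure (iid 𝔭) ∧
        ∀ (n : ℕ) (A : Fin n → Set S), (∀ i, MeasurableSet (A i)) →
          iid 𝔭 {ω | ∀ i : Fin n, ω (i : ℕ) ∈ A i} = ∏ i, 𝔭 (A i))
    -- an exchangeable law `ρ` on `S^∞`
    (ρ : Measure (ℕ → S)) [IsProbabilityMeasure ρ]
    (hexch : ∀ σ : Equiv.Perm ℕ, ρ.map (fun ω => ω ∘ σ) = ρ)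
    -- the directing (de Finetti) random measure `p̃`
    (ptilde : (ℕ → S) → Measure S) (hptilde_meas : Measurable ptilde)
    (hptilde_prob : ∀ᵐ ω ∂ρ, IsProbabilityMeasure (ptilde ω))
    (hdirect : ∀ C : Set (ℕ → S), MeasurableSet C → ∀ B : Set (Measure S), MeasurableSet B →
      ρ (C ∩ ptilde ⁻¹' B) = ∫⁻ ω in ptilde ⁻¹' B, iid (ptilde ω) C ∂ρ)
    (p : ℝ) (hp : 1 ≤ p)
    -- the estimators `p̂_n`, measurable functions of the first `n` coordinates
    (phat : (n : ℕ) → (Fin n → S) → Measure S)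
    (hphat_meas : ∀ n, Measurable (phat n))
    (hphatWp : ∀ n v, MemWp p (phat n v))
    (hptildeWp : ∀ᵐ ω ∂ρ, MemWp p (ptilde ω))
    -- the posterior distributions `π(ξ^{(n)})`
    (post : (n : ℕ) → (Fin n → S) → Measure (Measure S))
    (hpost_prob : ∀ n v, IsProbabilityMeasure (post n v))
    (hpost_meas : ∀ n, Measurable (post n))
    (hpost : ∀ (n : ℕ) (A : Set (Fin n → S)), MeasurableSet A →
      ∀ B : Set (Measure S), MeasurableSet B →
        ρ {ω | (fun i : Fin n => ω (i : ℕ)) ∈ A ∧ ptilde ω ∈ B}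
          = ∫⁻ ω in {ω | (fun i : Fin n => ω (i : ℕ)) ∈ A},
              post n (fun i : Fin n => ω (i : ℕ)) B ∂ρ)
    -- the sequence `b_n`
    (b : ℕ → ℝ) (hbpos : ∀ n, 0 < b n) (hbmono : Monotone b)
    (hbdiv : Filter.Tendsto b Filter.atTop Filter.atTop)
    -- the random constants `C_p(p̃)` and `Y_p(p̃)`
    (Cp Yp : Measure S → ℝ)
    (hCp_meas : Measurable fun ω => Cp (ptilde ω))
    (hYp_meas : Measurable fun ω => Yp (ptilde ω))
    (hCp_int : Integrable (fun ω => Cp (ptilde ω)) ρ)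
    -- (eq:Main1) holds with `ρ`-probability one for `p̃`
    (hMain1 : ∀ᵐ ω ∂ρ, ∫⁻ ω', ⨆ n : ℕ, ENNReal.ofReal
        ((b (n + 1) * wassW (fun u v => dist u v) p (ptilde ω)
          (phat (n + 1) (fun i : Fin (n + 1) => ω' (i : ℕ)))) ^ p) ∂(iid (ptilde ω))
        ≤ ENNReal.ofReal (Cp (ptilde ω)))
    -- (eq:Main2) holds with `ρ`-probability one for `p̃`
    (hMain2 : ∀ᵐ ω ∂ρ, ∀ᵐ ω' ∂(iid (ptilde ω)),
      Filter.limsup (fun n : ℕ => ENNReal.ofReal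
          (b (n + 1) * wassW (fun u v => dist u v) p (ptilde ω)
            (phat (n + 1) (fun i : Fin (n + 1) => ω' (i : ℕ))))) Filter.atTop
        ≤ ENNReal.ofReal (Yp (ptilde ω))) :
    ∀ᵐ ω ∂ρ, Filter.limsup (fun n : ℕ => ENNReal.ofReal
        (b n * wassW (fun μ ν => wassW (fun u v => dist u v) p μ ν) p
          (post n (fun i : Fin n => ω (i : ℕ)))
          (Measure.dirac (phat n (fun i : Fin n => ω (i : ℕ)))))) Filter.atTop
      ≤ ENNReal.ofReal (Yp (ptilde ω)) :=
  posterior_merging_general iid (fun 𝔭 h𝔭 => (hiid 𝔭 h𝔭).2) ρ ptilde hptilde_meas hdirect p hp phat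
    hphat_meas hphatWp hptildeWp post hpost_prob hpost_meas hpost b (fun n => (hbpos n).le) Cp Yp
    hCp_int hMain1 hMain2

end
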